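/- For every integer n ≥ 1, the singly-refined ASM generating function with bulk parameters related by y = x+1 satisfies Z_n(x,x+1;z) = (x·z+1)^{n−1}·(x+1)^{(n−1)(n−2)/2}, as an identity of polynomials in ℤ[x,z]. In other words, Σ_{A an ASM of size n} x^{ν(A)}·(x+1)^{μ(A)}·z^{ρT(A)} = (xz+1)^{n−1}(x+1)^{(n−1)(n−2)/2}. -/

import Mathlib

open Finset

/-- The `n × n` integer matrix encoded by `e`, with entries in `{-1, 0, 1}`. -/
def asmMat {n : ℕ} (e : Fin n → Fin n → Fin 3) : Fin n → Fin n → ℤ :=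
  fun i j => (e i j : ℤ) - 1

/-- `A` is an alternating sign matrix: all entries lie in `{-1, 0, 1}`, every
partial row sum and every partial column sum is `0` or `1` (equivalently, the
nonzero entries of each row and of each column alternate in sign), and every
complete row sum and column sum is `1`. -/
def IsASM {n : ℕ} (A : Fin n → Fin n → ℤ) : Prop :=
  (∀ i j, A i j = -1 ∨ A i j = 0 ∨ A i j = 1) ∧
  (∀ (i j : Fin n), (∑ j' ∈ univ.filter (fun j' : Fin n => j' ≤ j), A i j') = 0 ∨
    (∑ j' ∈ univ.filter (fun j' : Fin n => j' ≤ j), A i j') = 1) ∧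
  (∀ (i j : Fin n), (∑ i' ∈ univ.filter (fun i' : Fin n => i' ≤ i), A i' j) = 0 ∨
    (∑ i' ∈ univ.filter (fun i' : Fin n => i' ≤ i), A i' j) = 1) ∧
  (∀ i : Fin n, (∑ j, A i j) = 1) ∧
  (∀ j : Fin n, (∑ i, A i j) = 1)

/-- `ν(A)`, the number of generalized inversions of `A`. -/
def nuASM {n : ℕ} (A : Fin n → Fin n → ℤ) : ℕ :=
  (∑ i : Fin n, ∑ i' : Fin n, ∑ j : Fin n, ∑ j' : Fin n,
      if i < i' ∧ j' ≤ j then A i j * A i' j' else 0).toNat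

/-- `μ(A)`, the number of entries of `A` equal to `-1`. -/
def muASM {n : ℕ} (A : Fin n → Fin n → ℤ) : ℕ :=
  (univ.filter (fun p : Fin n × Fin n => A p.1 p.2 = -1)).card

/-- `ρT(A)`, the number of `0`'s to the left of the `1` in the top row of `A`. -/
def rhoT {n : ℕ} (A : Fin n → Fin n → ℤ) : ℕ :=
  (univ.filter (fun j : Fin n =>
    A ⟨0, j.pos⟩ j = 0 ∧ ∃ j' : Fin n, j < j' ∧ A ⟨0, j.pos⟩ j' = 1)).card

/-- `ρR(A)`, the number of `0`'s below the `1` in the right-most column of `A`. -/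
def rhoR {n : ℕ} (A : Fin n → Fin n → ℤ) : ℕ :=
  (univ.filter (fun i : Fin n =>
    A i ⟨n - 1, Nat.sub_lt i.pos Nat.one_pos⟩ = 0 ∧
      ∃ i' : Fin n, i' < i ∧ A i' ⟨n - 1, Nat.sub_lt i.pos Nat.one_pos⟩ = 1)).card

/-- `ρB(A)`, the number of `0`'s to the right of the `1` in the bottom row of `A`. -/
def rhoB {n : ℕ} (A : Fin n → Fin n → ℤ) : ℕ :=
  (univ.filter (fun j : Fin n =>
    A ⟨n - 1, Nat.sub_lt j.pos Nat.one_pos⟩ j = 0 ∧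
      ∃ j' : Fin n, j' < j ∧ A ⟨n - 1, Nat.sub_lt j.pos Nat.one_pos⟩ j' = 1)).card

/-- `ρL(A)`, the number of `0`'s above the `1` in the left-most column of `A`. -/
def rhoL {n : ℕ} (A : Fin n → Fin n → ℤ) : ℕ :=
  (univ.filter (fun i : Fin n =>
    A i ⟨0, i.pos⟩ = 0 ∧ ∃ i' : Fin n, i < i' ∧ A i' ⟨0, i.pos⟩ = 1)).card

open Classical in
/-- The quadruply-refined ASM generating function
`Zqua_n(x,y;z1,z2,z3,z4) = Σ_A x^{ν(A)} y^{μ(A)} z1^{ρT(A)} z2^{ρR(A)} z3^{ρB(A)} z4^{ρL(A)}`. -/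
noncomputable def Zqua (n : ℕ) {R : Type*} [CommRing R] (x y z1 z2 z3 z4 : R) : R :=
  ∑ e : Fin n → Fin n → Fin 3,
    if IsASM (asmMat e) then
      x ^ nuASM (asmMat e) * y ^ muASM (asmMat e) * z1 ^ rhoT (asmMat e) *
        z2 ^ rhoR (asmMat e) * z3 ^ rhoB (asmMat e) * z4 ^ rhoL (asmMat e)
    else 0

/-- Adjacent-boundary doubly-refined generating function `Zadj_n(x,y;z1,z2)`. -/
noncomputable def Zadj (n : ℕ) {R : Type*} [CommRing R] (x y z1 z2 : R) : R :=
  Zqua n x y z1 1 1 z2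

/-- Alternative adjacent-boundary doubly-refined generating function `Zbaradj_n(x,y;z1,z2)`. -/
noncomputable def Zbaradj (n : ℕ) {R : Type*} [CommRing R] (x y z1 z2 : R) : R :=
  Zqua n x y z1 z2 1 1

/-- Triply-refined generating function `Ztri_n(x,y;z1,z2,z3)`. -/
noncomputable def Ztri (n : ℕ) {R : Type*} [CommRing R] (x y z1 z2 z3 : R) : R :=
  Zqua n x y z1 1 z2 z3

/-- Opposite-boundary doubly-refined generating function `Zopp_n(x,y;z1,z2)`. -/
noncomputable def Zopp (n : ℕ) {R : Type*} [CommRing R] (x y z1 z2 : R) : R :=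
  Zqua n x y z1 1 z2 1

/-- Singly-refined generating function `Z_n(x,y;z)`. -/
noncomputable def Zsing (n : ℕ) {R : Type*} [CommRing R] (x y z : R) : R :=
  Zqua n x y z 1 1 1

/-- Unrefined generating function `Z_n(x,y)`.  Note `Zun 0 x y = 1`. -/
noncomputable def Zun (n : ℕ) {R : Type*} [CommRing R] (x y : R) : R :=
  Zqua n x y 1 1 1 1

/-!
The sum over alternating sign matrices is computed row by row, keeping a separate variable `X i`
for each row which marks the sum of the positions of the entries of that row, counted with sign.
The first `k` rows have column sums `0` or `1`, supported on a set `t` of `k` columns, and the next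
row is determined by how the new support interlaces the old one (a monotone triangle). When
`y = x + 1`, the generating function of the first `k` rows is
`∏ i < j, (X j + x X i) / (X j - X i)` times the alternant `det (X i ^ t m)`: subtracting
neighbouring rows of the alternant gives differences `X i ^ a * u ^ (b - a) - X i ^ b`, and since
the weight of a value `s` between `a` and `b` is then `[s < b] + x [a < s]`, these are
geometric sums over the possible `s`. For `k = n` the alternant is the Vandermonde determinant,
which cancels in a polynomial ring and leaves `∏ i < j, (X j + x X i)`. The entries of the top row
of an alternating sign matrix are all `0` except for a single `1`, so that `X = (z, 1, …, 1)` marks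
its position by `z`.
-/

section RowWeight

variable {R : Type*} [CommSemiring R] {k n : ℕ}

/-- The sequences `s` which interlace `t`, that is, `t 0 ≤ s 0 ≤ t 1 ≤ s 1 ≤ ⋯ ≤ t k`. -/
def interlacing (t : Fin (k + 1) → Fin n) : Finset (Fin k → Fin n) :=
  Fintype.piFinset fun m => Icc (t m.castSucc) (t m.succ)

theorem mem_interlacing {t : Fin (k + 1) → Fin n} {s : Fin k → Fin n} :
    s ∈ interlacing t ↔ ∀ m, t m.castSucc ≤ s m ∧ s m ≤ t m.succ := by
  simp [interlacing]

theorem monotone_of_mem_interlacing {t : Fin (k + 1) → Fin n} {s : Fin k → Fin n}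
    (hs : s ∈ interlacing t) : Monotone s := by
  rw [mem_interlacing] at hs
  cases k with
  | zero => exact Subsingleton.monotone s
  | succ k =>
    exact Fin.monotone_iff_le_succ.2 fun m => (hs m.castSucc).2.trans (hs m.succ).1

/-- The contribution of a value `s`, interlaced between `a` and `b` in the next row of a monotone
triangle, to the inversion count (marked by `x`) and to the number of `-1`s (marked by `y`) of the
corresponding alternating sign matrix. -/
def linkWeight {α : Type*} [LinearOrder α] (x y : R) (a b s : α) : R :=
  (if s = b then x else 1) * if a < s ∧ s < b then y else 1

theorem linkWeight_add_one {α : Type*} [LinearOrder α] (x : R) {a b s : α} (hab : a < b)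
    (has : a ≤ s) (hsb : s ≤ b) :
    linkWeight x (x + 1) a b s = (if s < b then 1 else 0) + if a < s then x else 0 := by
  rcases has.eq_or_lt with rfl | has
  · simp [linkWeight, hab, hab.ne]
  · rcases hsb.eq_or_lt with rfl | hsb
    · simp [linkWeight, hab]
    · simp [linkWeight, has, hsb, hsb.ne, add_comm]

theorem sum_Icc_linkWeight_mul (x u v : R) {a b : ℕ} (hab : a < b) :
    ∑ s ∈ Icc a b, linkWeight x (x + 1) a b s * (v ^ s * u ^ (b - s)) =
      (u + x * v) * ∑ s ∈ Ico a b, v ^ s * u ^ (b - 1 - s) := by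
  have lower : (Icc a b).filter (· < b) = Ico a b := by
    ext s
    simp only [mem_filter, mem_Icc, mem_Ico]
    lia
  have upper : (Icc a b).filter (a < ·) = Ico (a + 1) (b + 1) := by
    ext s
    simp only [mem_filter, mem_Icc, mem_Ico]
    lia
  have split (s : ℕ) (hs : s ∈ Icc a b) :=
    linkWeight_add_one x hab (mem_Icc.1 hs).1 (mem_Icc.1 hs).2
  rw [sum_congr rfl fun s hs => congrArg (· * _) (split s hs)]
  simp only [add_mul, sum_add_distrib, ite_mul, one_mul, zero_mul, ← sum_filter, lower, upper,
    ← sum_Ico_add', mul_sum]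
  congr 1 <;> refine sum_congr rfl fun s hs => ?_
  · rw [show b - s = b - 1 - s + 1 by have := mem_Ico.1 hs; lia]
    ring
  · rw [show b - (s + 1) = b - 1 - s by lia]
    ring

/-- The factor contributed to the weight of an alternating sign matrix by a row which changes the
support of the column sums from the values of `s` to those of `t`; `u` marks the sum of the
positions of the row's entries, counted with sign. -/
def rowWeight (x y u : R) (t : Fin (k + 1) → Fin n) (s : Fin k → Fin n) : R :=
  u ^ (t 0 : ℕ) *
    ∏ m, linkWeight x y (t m.castSucc) (t m.succ) (s m) * u ^ (t m.succ - s m : ℕ)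

theorem rowWeight_eq_pow_mul_pow (x y u : R) (t : Fin (k + 1) → Fin n) (s : Fin k → Fin n) :
    rowWeight x y u t s = x ^ #{m : Fin k | s m = t m.succ} *
      y ^ #{m : Fin k | t m.castSucc < s m ∧ s m < t m.succ} *
      u ^ ((t 0 : ℕ) + ∑ m : Fin k, (t m.succ - s m : ℕ)) := by
  simp only [rowWeight, linkWeight, prod_mul_distrib, ← prod_filter, prod_const,
    prod_pow_eq_pow_sum, pow_add]
  ring

end RowWeight

section Alternant

variable {R : Type*} [CommRing R] {k n : ℕ}

/-- The generalized Vandermonde matrix with exponents `t`. Its rows are indexed by the exponents, so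
that `alternant X (fun m => m)` is the transpose of `Matrix.vandermonde X`. -/
def alternant (X : Fin k → R) (t : Fin k → ℕ) : Matrix (Fin k) (Fin k) R :=
  Matrix.of fun m i => X i ^ t m

theorem det_alternant_succ (X : Fin (k + 1) → R) {t : Fin (k + 1) → ℕ} (ht : Monotone t) :
    (alternant X t).det = X (Fin.last k) ^ t 0 *
      (Matrix.of fun m i : Fin k => X i.castSucc ^ t m.castSucc *
        X (Fin.last k) ^ (t m.succ - t m.castSucc) - X i.castSucc ^ t m.succ).det := by
  let u : Fin k → R := fun m => X (Fin.last k) ^ (t m.succ - t m.castSucc)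
  let B : Matrix (Fin (k + 1)) (Fin (k + 1)) R := Matrix.of <| Fin.cons (fun i => X i ^ t 0)
    fun m i => X i ^ t m.succ - X i ^ t m.castSucc * u m
  have det_eq_B : (alternant X t).det = B.det :=
    Matrix.det_eq_of_forall_row_eq_smul_add_pred u (fun i => by simp [B, alternant])
      fun m i => by simp [B, alternant, mul_comm]
  have last_col (m : Fin k) : B m.succ (Fin.last k) = 0 := by
    simp [B, u, ← pow_add, Nat.add_sub_cancel' (ht m.castSucc_lt_succ.le)]
  have minor : B.submatrix Fin.succ Fin.castSucc = -Matrix.of fun m i : Fin k =>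
      X i.castSucc ^ t m.castSucc * u m - X i.castSucc ^ t m.succ := by
    ext m i
    simp [B]
  have sign : (-1 : R) ^ k * (-1) ^ k = 1 := by simp [← mul_pow]
  rw [det_eq_B, Matrix.det_succ_column B (Fin.last k), Fin.sum_univ_succ]
  simp only [last_col, mul_zero, zero_mul, sum_const_zero, add_zero, Fin.succAbove_zero,
    Fin.succAbove_last, minor, Matrix.det_neg, Fintype.card_fin, Fin.val_zero, Fin.val_last,
    zero_add]
  simp only [B, Matrix.of_apply, Fin.cons_zero]
  linear_combination X (Fin.last k) ^ t 0 * (Matrix.of fun m i : Fin k =>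
    X i.castSucc ^ t m.castSucc * u m - X i.castSucc ^ t m.succ).det * sign

theorem det_alternant_eq_zero_of_not_injective (X : Fin k → R) {t : Fin k → ℕ}
    (ht : ¬ Function.Injective t) : (alternant X t).det = 0 := by
  obtain ⟨m, m', hm, hne⟩ := Function.not_injective_iff.1 ht
  exact Matrix.det_zero_of_row_eq hne (funext fun i => by simp [alternant, hm])

theorem sub_mul_sum_linkWeight_mul (x u v : R) {a b : Fin n} (hab : a < b) :
    (u - v) * ∑ s ∈ Icc a b, linkWeight x (x + 1) a b s * (v ^ (s : ℕ) * u ^ (b - s : ℕ)) =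
      (u + x * v) * (v ^ (a : ℕ) * u ^ (b - a : ℕ) - v ^ (b : ℕ)) := by
  have toNat : ∑ s ∈ Icc a b, linkWeight x (x + 1) a b s * (v ^ (s : ℕ) * u ^ (b - s : ℕ)) =
      ∑ s ∈ Icc (a : ℕ) b, linkWeight x (x + 1) (a : ℕ) b s * (v ^ s * u ^ (b - s : ℕ)) := by
    rw [← Fin.map_valEmbedding_Icc, sum_map]
    simp [linkWeight, Fin.ext_iff]
  rw [toNat, sum_Icc_linkWeight_mul x u v hab, mul_left_comm, ← neg_sub v u, neg_mul,
    mul_geom_sum₂_Ico v u hab.le, neg_sub]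

theorem sum_rowWeight_mul_det_alternant (x : R) (X : Fin (k + 1) → R)
    {t : Fin (k + 1) → Fin n} (ht : StrictMono t) :
    (∏ i : Fin k, (X (Fin.last k) - X i.castSucc)) * ∑ s ∈ interlacing t,
        rowWeight x (x + 1) (X (Fin.last k)) t s * (alternant (Fin.init X) fun m => s m).det =
      (∏ i : Fin k, (X (Fin.last k) + x * X i.castSucc)) * (alternant X fun m => t m).det := by
  set u := X (Fin.last k) with hu
  let c (m : Fin k) (s : Fin n) : R :=
    linkWeight x (x + 1) (t m.castSucc) (t m.succ) s * u ^ (t m.succ - s : ℕ)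
  have expand : (Matrix.of fun m i : Fin k => ∑ s ∈ Icc (t m.castSucc) (t m.succ),
      c m s * X i.castSucc ^ (s : ℕ)).det =
      ∑ s ∈ interlacing t, (∏ m, c m (s m)) * (alternant (Fin.init X) fun m => s m).det := by
    convert (Matrix.detRowAlternating (n := Fin k) (R := R)).toMultilinearMap.map_sum_finset
      (fun m s i => c m s * X i.castSucc ^ (s : ℕ)) (fun m => Icc (t m.castSucc) (t m.succ))
      using 1
    · congr 1
      ext m i
      simp
    · exact sum_congr rfl fun s _ => (Matrix.det_mul_column _ _).symm
  have telescope (m i : Fin k) : (u - X i.castSucc) *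
      ∑ s ∈ Icc (t m.castSucc) (t m.succ), c m s * X i.castSucc ^ (s : ℕ) =
      (u + x * X i.castSucc) * (X i.castSucc ^ (t m.castSucc : ℕ) *
        u ^ (t m.succ - t m.castSucc : ℕ) - X i.castSucc ^ (t m.succ : ℕ)) := by
    rw [← sub_mul_sum_linkWeight_mul x u _ (ht m.castSucc_lt_succ)]
    simp only [c, mul_assoc, mul_comm]
  rw [det_alternant_succ X (fun _ _ h => ht.monotone h), ← hu, mul_left_comm, ← Matrix.det_mul_row]
  simp only [Matrix.of_apply, ← telescope, rowWeight, mul_assoc, ← mul_sum]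
  rw [← expand, mul_left_comm, ← Matrix.det_mul_row]
  rfl

end Alternant

section Interlacing

variable {k n : ℕ}

/-- The nonzero entries of `v` alternate between `1` and `-1`, starting with `1`; equivalently,
every partial sum is `0` or `1`. -/
def IsAlternating (v : Fin k → ℤ) : Prop :=
  ∀ i, ∑ j ∈ Iic i, v j = 0 ∨ ∑ j ∈ Iic i, v j = 1

theorem IsAlternating.sum_eq_zero_or_one {v : Fin k → ℤ} (hv : IsAlternating v) :
    ∑ i, v i = 0 ∨ ∑ i, v i = 1 := by
  cases k with
  | zero => simp
  | succ k => simpa [← Fin.top_eq_last] using hv (Fin.last k)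

theorem isAlternating_succ_iff {v : Fin (k + 1) → ℤ} :
    IsAlternating v ↔ IsAlternating (Fin.init v) ∧ (∑ i, v i = 0 ∨ ∑ i, v i = 1) := by
  simp [IsAlternating, Fin.forall_fin_succ', Fin.sum_Iic_castSucc, Fin.init, ← Fin.top_eq_last]

theorem IsAlternating.mem_Icc {v : Fin k → ℤ} (hv : IsAlternating v) (i : Fin k) :
    v i ∈ Icc (-1) 1 := by
  induction k with
  | zero => exact i.elim0
  | succ k ih =>
    obtain ⟨hinit, hsum⟩ := isAlternating_succ_iff.1 hv
    induction i using Fin.lastCases with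
    | cast i => exact ih hinit i
    | last =>
      have hinit_sum := hinit.sum_eq_zero_or_one
      rw [Fin.sum_univ_castSucc] at hsum
      simp only [Fin.init] at hinit_sum
      rw [Finset.mem_Icc]
      lia

/-- The vector counting how often `t` takes each value. -/
def countVec (t : Fin k → Fin n) (j : Fin n) : ℤ :=
  #{m | t m = j}

theorem sum_countVec_mul (t : Fin k → Fin n) (f : Fin n → ℤ) :
    ∑ j, countVec t j * f j = ∑ m, f (t m) := by
  simp only [countVec, card_filter, Nat.cast_sum, Nat.cast_ite, Nat.cast_one, Nat.cast_zero,
    sum_mul, ite_mul, one_mul, zero_mul]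
  rw [sum_comm]
  simp

theorem sum_countVec (t : Fin k → Fin n) : ∑ j, countVec t j = k := by
  simpa using sum_countVec_mul t 1

theorem sum_Iic_countVec (t : Fin k → Fin n) (j : Fin n) :
    ∑ i ∈ Iic j, countVec t i = #{m | t m ≤ j} := by
  simpa [← filter_ge_eq_Iic, sum_filter] using sum_countVec_mul t fun i => if i ≤ j then 1 else 0

theorem countVec_eq_ite {t : Fin k → Fin n} (ht : Function.Injective t) (j : Fin n) :
    countVec t j = if j ∈ Set.range t then 1 else 0 := by
  classical
  split_ifs with h
  · obtain ⟨m, rfl⟩ := h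
    simp [countVec, ht.eq_iff, filter_eq']
  · simpa [countVec, filter_eq_empty_iff] using h

theorem eq_of_countVec_eq {s t : Fin k → Fin n} (hs : StrictMono s) (ht : StrictMono t)
    (h : countVec s = countVec t) : s = t := by
  refine (StrictMono.range_inj hs ht).1 (Set.ext fun j => ?_)
  have := congrFun h j
  rw [countVec_eq_ite hs.injective, countVec_eq_ite ht.injective] at this
  split_ifs at this <;> simp_all

theorem exists_strictMono_countVec_eq {f : Fin n → ℤ} (hf : ∀ j, f j = 0 ∨ f j = 1)
    (hsum : ∑ j, f j = k) : ∃ t : Fin k → Fin n, StrictMono t ∧ countVec t = f := by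
  have hcard : #{j | f j = 1} = k := by
    rw [← Nat.cast_inj (R := ℤ), ← hsum, ← sum_boole]
    exact sum_congr rfl fun j _ => by rcases hf j with h | h <;> simp [h]
  refine ⟨orderEmbOfFin _ hcard, (orderEmbOfFin _ hcard).strictMono, ?_⟩
  ext j
  simp only [countVec_eq_ite (orderEmbOfFin _ hcard).injective, range_orderEmbOfFin]
  rcases hf j with h | h <;> simp [h]

theorem lt_card_filter_le_iff {t : Fin k → Fin n} (ht : Monotone t) {j : Fin n} {m : Fin k} :
    (m : ℕ) < #{i | t i ≤ j} ↔ t m ≤ j := by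
  constructor
  · contrapose!
    intro hj
    rw [← Fin.card_Iio m]
    exact card_le_card fun i hi =>
      mem_Iio.2 (ht.reflect_lt ((mem_filter.1 hi).2.trans_lt hj))
  · intro hj
    rw [Nat.lt_iff_add_one_le, ← Fin.card_Iic m]
    exact card_le_card fun i hi => by simpa using (ht (mem_Iic.1 hi)).trans hj

theorem card_filter_le_apply {s : Fin k → Fin n} (hs : StrictMono s) (m : Fin k) :
    #{i | s i ≤ s m} = (m : ℕ) + 1 := by
  simp [hs.le_iff_le, filter_ge_eq_Iic]

variable {t : Fin (k + 1) → Fin n} {s : Fin k → Fin n}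

theorem isAlternating_countVec_sub_iff (ht : StrictMono t) (hs : StrictMono s) :
    IsAlternating (countVec t - countVec s) ↔ s ∈ interlacing t := by
  simp only [IsAlternating, Pi.sub_apply, sum_sub_distrib, sum_Iic_countVec, mem_interlacing]
  constructor
  · refine fun h m => ⟨?_, ?_⟩
    · have := h (s m)
      rw [card_filter_le_apply hs] at this
      rw [← lt_card_filter_le_iff ht.monotone, Fin.val_castSucc]
      omega
    · have := h (t m.succ)
      rw [card_filter_le_apply ht, Fin.val_succ] at this
      rw [← lt_card_filter_le_iff hs.monotone]
      omega
  · intro h j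
    have card_s_le : #{m | s m ≤ j} ≤ k := by simpa using card_le_univ {m | s m ≤ j}
    have card_t_le : #{m | t m ≤ j} ≤ k + 1 := by simpa using card_le_univ {m | t m ≤ j}
    have lower : #{m | s m ≤ j} ≤ #{m | t m ≤ j} := by
      by_contra! hlt
      let m : Fin k := ⟨#{m | t m ≤ j}, by lia⟩
      have hsm : s m ≤ j := (lt_card_filter_le_iff hs.monotone).1 hlt
      exact lt_irrefl _ ((lt_card_filter_le_iff (m := m.castSucc) ht.monotone).2
        ((h m).1.trans hsm))
    have upper : #{m | t m ≤ j} ≤ #{m | s m ≤ j} + 1 := by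
      by_contra! hlt
      let m : Fin k := ⟨#{m | s m ≤ j}, by lia⟩
      have htm : t m.succ ≤ j := (lt_card_filter_le_iff (m := m.succ) ht.monotone).1 hlt
      exact lt_irrefl _ ((lt_card_filter_le_iff (m := m) hs.monotone).2 ((h m).2.trans htm))
    lia

theorem sum_countVec_mul_sum_Iic (ht : StrictMono t) (hs : StrictMono s) (h : s ∈ interlacing t) :
    ∑ j, countVec s j * ∑ j' ∈ Iic j, (countVec t - countVec s) j' =
      #{m : Fin k | s m = t m.succ} := by
  rw [sum_countVec_mul, ← sum_boole]
  refine sum_congr rfl fun m _ => ?_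
  have alternating := (isAlternating_countVec_sub_iff ht hs).2 h (s m)
  have lt_card_iff := lt_card_filter_le_iff ht.monotone (j := s m) (m := m.succ)
  have eq_iff : s m = t m.succ ↔ t m.succ ≤ s m :=
    ⟨Eq.ge, ((mem_interlacing.1 h m).2.antisymm ·)⟩
  simp only [Pi.sub_apply, sum_sub_distrib, sum_Iic_countVec, card_filter_le_apply hs]
    at alternating ⊢
  rw [← eq_iff, Fin.val_succ] at lt_card_iff
  split_ifs <;> lia

theorem apply_notMem_range_iff (ht : StrictMono t) (h : s ∈ interlacing t) (m : Fin k) :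
    s m ∉ Set.range t ↔ t m.castSucc < s m ∧ s m < t m.succ := by
  obtain ⟨lower, upper⟩ := mem_interlacing.1 h m
  constructor
  · exact fun hm => ⟨lower.lt_of_ne fun e => hm ⟨_, e⟩, upper.lt_of_ne fun e => hm ⟨_, e.symm⟩⟩
  · rintro ⟨h₁, h₂⟩ ⟨i, hi⟩
    rw [← hi, ht.lt_iff_lt] at h₁ h₂
    exact (Fin.le_castSucc_iff.2 h₂).not_gt h₁

theorem card_countVec_sub_eq_neg_one (ht : StrictMono t) (hs : StrictMono s)
    (h : s ∈ interlacing t) :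
    #{j | (countVec t - countVec s) j = -1} =
      #{m : Fin k | t m.castSucc < s m ∧ s m < t m.succ} := by
  classical
  have eq_neg_one_iff (j : Fin n) : (countVec t - countVec s) j = -1 ↔
      j ∈ Set.range s ∧ j ∉ Set.range t := by
    rw [Pi.sub_apply, countVec_eq_ite ht.injective, countVec_eq_ite hs.injective]
    split_ifs <;> simp_all
  rw [← card_map ⟨s, hs.injective⟩]
  congr 1
  ext j
  simp only [eq_neg_one_iff, ← apply_notMem_range_iff ht h, mem_filter, mem_univ, true_and,
    mem_map, Function.Embedding.coeFn_mk]
  constructor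
  · rintro ⟨⟨m, rfl⟩, hm⟩
    exact ⟨m, hm, rfl⟩
  · rintro ⟨m, hm, rfl⟩
    exact ⟨⟨m, rfl⟩, hm⟩

/-- The sum of the positions of the entries of `r`, counted with sign. -/
def moment (r : Fin n → ℤ) : ℤ :=
  ∑ j, r j * (j : ℕ)

theorem moment_countVec (t : Fin k → Fin n) : moment (countVec t) = ∑ m, ((t m : ℕ) : ℤ) :=
  sum_countVec_mul t fun j => ((j : ℕ) : ℤ)

theorem moment_countVec_sub (h : s ∈ interlacing t) :
    moment (countVec t - countVec s) = ((t 0 : ℕ) + ∑ m : Fin k, (t m.succ - s m : ℕ) : ℕ) := by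
  have sub_eq : moment (countVec t - countVec s) = moment (countVec t) - moment (countVec s) := by
    simp [moment, sub_mul]
  rw [sub_eq, moment_countVec, moment_countVec, Fin.sum_univ_succ, add_sub_assoc,
    ← sum_sub_distrib]
  push_cast
  exact congrArg _ (sum_congr rfl fun m _ => (Nat.cast_sub (mem_interlacing.1 h m).2).symm)

end Interlacing

section PartialASM

variable {k n : ℕ}

/-- `A` consists of the top `k` rows of an alternating sign matrix, and the values of `t` are the
columns in which these rows sum to `1`. -/
structure IsPartialASM (A : Fin k → Fin n → ℤ) (t : Fin k → Fin n) : Prop where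
  strictMono : StrictMono t
  row_alternating : ∀ i, IsAlternating (A i)
  col_alternating : ∀ j, IsAlternating fun i => A i j
  sum_row : ∀ i, ∑ j, A i j = 1
  sum_col : ∀ j, ∑ i, A i j = countVec t j

theorem IsPartialASM.unique {A : Fin k → Fin n → ℤ} {s t : Fin k → Fin n} (hs : IsPartialASM A s)
    (ht : IsPartialASM A t) : s = t :=
  eq_of_countVec_eq hs.strictMono ht.strictMono <| funext fun j => by rw [← hs.sum_col, ht.sum_col]

theorem IsPartialASM.exists_init {A : Fin (k + 1) → Fin n → ℤ} {t : Fin (k + 1) → Fin n}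
    (h : IsPartialASM A t) :
    ∃ s ∈ interlacing t, IsPartialASM (Fin.init A) s ∧
      A (Fin.last k) = countVec t - countVec s := by
  have col_init (j : Fin n) : IsAlternating fun i => Fin.init A i j :=
    (isAlternating_succ_iff.1 (h.col_alternating j)).1
  have sum_init : ∑ j, ∑ i, Fin.init A i j = k := by
    simp_rw [sum_comm (t := univ (α := Fin k)), Fin.init, h.sum_row]
    simp
  obtain ⟨s, hs, hs_col⟩ := exists_strictMono_countVec_eq
    (fun j => (col_init j).sum_eq_zero_or_one) sum_init
  have last_row : A (Fin.last k) = countVec t - countVec s := by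
    ext j
    rw [Pi.sub_apply, ← h.sum_col, hs_col, Fin.sum_univ_castSucc]
    exact (add_sub_cancel_left _ _).symm
  exact ⟨s, (isAlternating_countVec_sub_iff h.strictMono hs).1 (last_row ▸ h.row_alternating _),
    ⟨hs, fun i => h.row_alternating _, col_init, fun i => h.sum_row _,
      fun j => (congrFun hs_col j).symm⟩, last_row⟩

theorem IsPartialASM.of_init {A : Fin (k + 1) → Fin n → ℤ} {t : Fin (k + 1) → Fin n}
    {s : Fin k → Fin n} (ht : StrictMono t) (hs : s ∈ interlacing t)
    (h : IsPartialASM (Fin.init A) s) (last_row : A (Fin.last k) = countVec t - countVec s) :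
    IsPartialASM A t := by
  have sum_col (j : Fin n) : ∑ i, A i j = countVec t j := by
    rw [Fin.sum_univ_castSucc, last_row, Pi.sub_apply, ← h.sum_col]
    exact add_sub_cancel _ _
  refine ⟨ht, fun i => ?_, fun j => ?_, fun i => ?_, sum_col⟩
  · induction i using Fin.lastCases with
    | cast i => exact h.row_alternating i
    | last => exact last_row ▸ (isAlternating_countVec_sub_iff ht h.strictMono).2 hs
  · refine isAlternating_succ_iff.2 ⟨h.col_alternating j, ?_⟩
    rw [sum_col, countVec_eq_ite ht.injective]
    split_ifs <;> simp
  · induction i using Fin.lastCases with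
    | cast i => exact h.sum_row i
    | last => simp [last_row, sum_countVec]

/-- The generalized inversion count of a rectangular matrix, before truncation to `ℕ`. -/
def inversionSum (A : Fin k → Fin n → ℤ) : ℤ :=
  ∑ i : Fin k, ∑ i' : Fin k, ∑ j : Fin n, ∑ j' : Fin n,
    if i < i' ∧ j' ≤ j then A i j * A i' j' else 0

/-- The number of entries of a rectangular matrix equal to `-1`. -/
def negOneCount (A : Fin k → Fin n → ℤ) : ℕ :=
  #{p : Fin k × Fin n | A p.1 p.2 = -1}

theorem inversionSum_succ (A : Fin (k + 1) → Fin n → ℤ) :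
    inversionSum A = inversionSum (Fin.init A) +
      ∑ j, (∑ i, Fin.init A i j) * ∑ j' ∈ Iic j, A (Fin.last k) j' := by
  have not_last_lt (i : Fin (k + 1)) : ¬ Fin.last k < i := i.le_last.not_gt
  have pairs_with_last : ∑ j, (∑ i, Fin.init A i j) * ∑ j' ∈ Iic j, A (Fin.last k) j' =
      ∑ i : Fin k, ∑ j, ∑ j', if j' ≤ j then A i.castSucc j * A (Fin.last k) j' else 0 := by
    rw [sum_comm]
    simp only [← filter_ge_eq_Iic, sum_filter, sum_mul_sum, mul_ite, mul_zero, Fin.init]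
  rw [pairs_with_last, inversionSum, Fin.sum_univ_castSucc]
  simp only [not_last_lt, false_and, if_false, sum_const_zero, add_zero,
    Fin.sum_univ_castSucc (n := k), sum_add_distrib, Fin.castSucc_lt_castSucc_iff,
    Fin.castSucc_lt_last, true_and]
  rfl

theorem IsPartialASM.inversionSum_nonneg {A : Fin k → Fin n → ℤ} {t : Fin k → Fin n}
    (h : IsPartialASM A t) : 0 ≤ inversionSum A := by
  induction k with
  | zero => simp [inversionSum]
  | succ k ih =>
    obtain ⟨s, hs, hinit, last_row⟩ := h.exists_init
    simp only [inversionSum_succ, hinit.sum_col, last_row,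
      sum_countVec_mul_sum_Iic h.strictMono hinit.strictMono hs]
    exact add_nonneg (ih hinit) (Nat.cast_nonneg _)

theorem negOneCount_succ (A : Fin (k + 1) → Fin n → ℤ) :
    negOneCount A = negOneCount (Fin.init A) + #{j | A (Fin.last k) j = -1} := by
  simp only [negOneCount, card_filter, Fintype.sum_prod_type, Fin.sum_univ_castSucc]
  rfl

variable {R : Type*} [CommSemiring R]

/-- The weight of a matrix: `x` marks inversions, `y` marks entries `-1`, and `X i` marks the sum of
the positions of the entries of row `i`, counted with sign. -/
def asmWeight (x y : R) (X : Fin k → R) (A : Fin k → Fin n → ℤ) : R :=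
  x ^ (inversionSum A).toNat * y ^ negOneCount A * ∏ i, X i ^ (moment (A i)).toNat

theorem asmWeight_succ (x y : R) (X : Fin (k + 1) → R) {A : Fin (k + 1) → Fin n → ℤ}
    {t : Fin (k + 1) → Fin n} {s : Fin k → Fin n} (ht : StrictMono t) (hs : s ∈ interlacing t)
    (h : IsPartialASM (Fin.init A) s) (last_row : A (Fin.last k) = countVec t - countVec s) :
    asmWeight x y X A =
      rowWeight x y (X (Fin.last k)) t s * asmWeight x y (Fin.init X) (Fin.init A) := by
  have inversions : (inversionSum A).toNat =
      (inversionSum (Fin.init A)).toNat + #{m : Fin k | s m = t m.succ} := by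
    simp only [inversionSum_succ, h.sum_col, last_row,
      sum_countVec_mul_sum_Iic ht h.strictMono hs]
    rw [Int.toNat_add h.inversionSum_nonneg (Int.natCast_nonneg _), Int.toNat_natCast]
  rw [asmWeight, asmWeight, inversions, negOneCount_succ, Fin.prod_univ_castSucc, last_row,
    moment_countVec_sub hs, Int.toNat_natCast, card_countVec_sub_eq_neg_one ht h.strictMono hs,
    rowWeight_eq_pow_mul_pow]
  simp only [Fin.init]
  ring

open Classical in
/-- The partial alternating sign matrices whose column sums are supported on the values of `t`. -/
noncomputable def partialASMs (t : Fin k → Fin n) : Finset (Fin k → Fin n → ℤ) :=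
  {A ∈ Fintype.piFinset fun _ => Fintype.piFinset fun _ => Icc (-1) 1 | IsPartialASM A t}

theorem mem_partialASMs {A : Fin k → Fin n → ℤ} {t : Fin k → Fin n} :
    A ∈ partialASMs t ↔ IsPartialASM A t := by
  simp only [partialASMs, mem_filter, Fintype.mem_piFinset, and_iff_right_iff_imp]
  exact fun h i => (h.row_alternating i).mem_Icc

/-- The generating function of partial alternating sign matrices with respect to `asmWeight`. -/
noncomputable def partialZ (x y : R) (X : Fin k → R) (t : Fin k → Fin n) : R :=
  ∑ A ∈ partialASMs t, asmWeight x y X A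

theorem partialZ_succ (x y : R) (X : Fin (k + 1) → R) {t : Fin (k + 1) → Fin n}
    (ht : StrictMono t) :
    partialZ x y X t =
      ∑ s ∈ interlacing t, rowWeight x y (X (Fin.last k)) t s * partialZ x y (Fin.init X) s := by
  simp only [partialZ, mul_sum]
  rw [sum_sigma']
  symm
  refine sum_bij
    (fun p _ => Fin.snoc (α := fun _ => Fin n → ℤ) p.2 (countVec t - countVec p.1)) ?_ ?_ ?_ ?_
  · rintro ⟨s, A⟩ h
    obtain ⟨hs, hA⟩ := mem_sigma.1 h
    exact mem_partialASMs.2 (.of_init ht hs (by simpa using mem_partialASMs.1 hA) (by simp))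
  · rintro ⟨s, A⟩ h ⟨s', A'⟩ h' heq
    obtain rfl : A = A' := by simpa using congrArg Fin.init heq
    obtain rfl : s = s' := (mem_partialASMs.1 (mem_sigma.1 h).2).unique
      (mem_partialASMs.1 (mem_sigma.1 h').2)
    rfl
  · intro A hA
    obtain ⟨s, hs, hinit, last_row⟩ := (mem_partialASMs.1 hA).exists_init
    refine ⟨⟨s, Fin.init A⟩, mem_sigma.2 ⟨hs, mem_partialASMs.2 hinit⟩, ?_⟩
    rw [← last_row, Fin.snoc_init_self]
  · rintro ⟨s, A⟩ h
    obtain ⟨hs, hA⟩ := mem_sigma.1 h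
    rw [asmWeight_succ x y X ht hs (by simpa using mem_partialASMs.1 hA) (by simp), Fin.init_snoc]

theorem partialZ_eq_zero_of_not_strictMono (x y : R) (X : Fin k → R) {t : Fin k → Fin n}
    (ht : ¬ StrictMono t) : partialZ x y X t = 0 :=
  sum_eq_zero fun _ hA => absurd (mem_partialASMs.1 hA).strictMono ht

theorem partialZ_zero (x y : R) (X : Fin 0 → R) (t : Fin 0 → Fin n) : partialZ x y X t = 1 := by
  have partialASMs_eq : partialASMs t = {Fin.elim0} :=
    eq_singleton_iff_unique_mem.2
      ⟨mem_partialASMs.2 ⟨Subsingleton.strictMono t, (·.elim0), fun _ => (·.elim0), (·.elim0),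
        fun _ => by simp [countVec]⟩, fun _ _ => Subsingleton.elim _ _⟩
  simp [partialZ, partialASMs_eq, asmWeight, inversionSum, negOneCount]

theorem map_partialZ {S : Type*} [CommSemiring S] (φ : R →+* S) (x y : R) (X : Fin k → R)
    (t : Fin k → Fin n) : φ (partialZ x y X t) = partialZ (φ x) (φ y) (φ ∘ X) t := by
  simp [partialZ, asmWeight]

end PartialASM

section Vandermonde

variable {R : Type*} [CommRing R] {k n : ℕ}

theorem prod_prod_Ioi_castSucc {M : Type*} [CommMonoid M] (f : Fin (k + 1) → Fin (k + 1) → M) :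
    ∏ i, ∏ j ∈ Ioi i, f i j = (∏ i : Fin k, ∏ j ∈ Ioi i, f i.castSucc j.castSucc) *
      ∏ i : Fin k, f i.castSucc (Fin.last k) := by
  have swap {l : ℕ} (g : Fin l → Fin l → M) :
      ∏ i, ∏ j ∈ Ioi i, g i j = ∏ j, ∏ i ∈ Iio j, g i j := prod_comm' (by simp)
  rw [swap, swap, Fin.prod_univ_castSucc]
  congr 1
  · exact prod_congr rfl fun j _ => Fin.prod_Iio_castSucc _ _
  · simp [Fin.Iio_last_eq_map]

theorem det_vandermonde_mul_partialZ (x : R) (X : Fin k → R) {t : Fin k → Fin n}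
    (ht : Monotone t) :
    (Matrix.vandermonde X).det * partialZ x (x + 1) X t =
      (∏ i, ∏ j ∈ Ioi i, (X j + x * X i)) * (alternant X fun m => t m).det := by
  induction k with
  | zero => simp [partialZ_zero]
  | succ k ih =>
    by_cases hstrict : StrictMono t
    · have sum_ih : (Matrix.vandermonde (Fin.init X)).det * ∑ s ∈ interlacing t,
          rowWeight x (x + 1) (X (Fin.last k)) t s * partialZ x (x + 1) (Fin.init X) s =
          (∏ i, ∏ j ∈ Ioi i, (Fin.init X j + x * Fin.init X i)) * ∑ s ∈ interlacing t,
            rowWeight x (x + 1) (X (Fin.last k)) t s *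
              (alternant (Fin.init X) fun m => s m).det := by
        rw [mul_sum, mul_sum]
        refine sum_congr rfl fun s hs => ?_
        rw [mul_left_comm, ih (Fin.init X) (monotone_of_mem_interlacing hs), mul_left_comm]
      rw [Matrix.det_vandermonde] at sum_ih ⊢
      rw [prod_prod_Ioi_castSucc fun i j => X j - X i,
        prod_prod_Ioi_castSucc fun i j => X j + x * X i, mul_assoc _ _ (alternant X _).det,
        ← sum_rowWeight_mul_det_alternant x X hstrict, partialZ_succ x (x + 1) X hstrict,
        mul_right_comm]
      simp only [Fin.init] at sum_ih ⊢
      rw [sum_ih, mul_right_comm, mul_assoc]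
    · have not_injective : ¬ Function.Injective fun m => (t m : ℕ) := fun h =>
        hstrict (ht.strictMono_of_injective fun _ _ e => h (congrArg _ e))
      rw [partialZ_eq_zero_of_not_strictMono _ _ _ hstrict,
        det_alternant_eq_zero_of_not_injective X not_injective, mul_zero, mul_zero]

theorem partialZ_id_eq_prod (x : R) (X : Fin n → R) :
    partialZ x (x + 1) X id = ∏ i, ∏ j ∈ Ioi i, (X j + x * X i) := by
  let P := MvPolynomial (Option (Fin n)) ℤ
  let x₀ : P := MvPolynomial.X none
  let X₀ (i : Fin n) : P := MvPolynomial.X (some i)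
  have generic : partialZ x₀ (x₀ + 1) X₀ id = ∏ i, ∏ j ∈ Ioi i, (X₀ j + x₀ * X₀ i) := by
    have X₀_injective : Function.Injective X₀ :=
      MvPolynomial.X_injective.comp (Option.some_injective _)
    have vandermonde_eq : (alternant X₀ fun m => (id m : Fin n)).det =
        (Matrix.vandermonde X₀).det := by
      rw [← Matrix.det_transpose]
      rfl
    refine mul_left_cancel₀ (Matrix.det_vandermonde_ne_zero_iff.2 X₀_injective) ?_
    rw [det_vandermonde_mul_partialZ x₀ X₀ monotone_id, vandermonde_eq, mul_comm]
  let φ : P →+* R := MvPolynomial.eval₂Hom (Int.castRingHom R) fun o => o.elim x X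
  have φ_x₀ : φ x₀ = x := MvPolynomial.eval₂Hom_X' _ _ _
  have φ_X₀ (i : Fin n) : φ (X₀ i) = X i := MvPolynomial.eval₂Hom_X' _ _ _
  have φ_comp_X₀ : φ ∘ X₀ = X := funext φ_X₀
  simpa only [map_partialZ, map_prod, map_add, map_mul, map_one, φ_x₀, φ_X₀, φ_comp_X₀]
    using congrArg φ generic

theorem prod_prod_Ioi_cons_one (x z : R) (k : ℕ) :
    ∏ i : Fin (k + 1), ∏ j ∈ Ioi i, ((Fin.cons z fun _ => 1 : Fin (k + 1) → R) j +
      x * (Fin.cons z fun _ => 1 : Fin (k + 1) → R) i) =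
    (x * z + 1) ^ k * (x + 1) ^ (k * (k - 1) / 2) := by
  have card_pairs : ∑ i : Fin k, (k - 1 - i : ℕ) = k * (k - 1) / 2 := by
    rw [Fin.sum_univ_eq_sum_range fun i => k - 1 - i, sum_range_reflect (fun i => i), sum_range_id]
  rw [Fin.prod_univ_succ]
  simp [Fin.Ioi_zero_eq_map, Fin.prod_Ioi_succ, prod_pow_eq_pow_sum, card_pairs, add_comm]

end Vandermonde

section SinglyRefined

variable {R : Type*} [CommRing R] {n : ℕ}

theorem isASM_iff_isPartialASM_id {A : Fin n → Fin n → ℤ} : IsASM A ↔ IsPartialASM A id := by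
  have countVec_id (j : Fin n) : countVec id j = 1 := by
    simp [countVec_eq_ite Function.injective_id]
  simp only [IsASM, filter_ge_eq_Iic]
  constructor
  · rintro ⟨-, row, col, sum_row, sum_col⟩
    exact ⟨strictMono_id, row, fun j i => col i j, sum_row, by simpa [countVec_id] using sum_col⟩
  · refine fun h => ⟨fun i j => ?_, h.row_alternating, fun i j => h.col_alternating j i, h.sum_row,
      fun j => (h.sum_col j).trans (countVec_id j)⟩
    have := mem_Icc.1 ((h.row_alternating i).mem_Icc j)
    lia

theorem IsPartialASM.exists_row_zero_eq_single {k : ℕ} {A : Fin (k + 1) → Fin n → ℤ}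
    {t : Fin (k + 1) → Fin n} (h : IsPartialASM A t) :
    ∃ c : Fin n, A 0 = Pi.single c 1 := by
  have entries (j : Fin n) : A 0 j = 0 ∨ A 0 j = 1 := by
    simpa [← bot_eq_zero] using h.col_alternating j 0
  obtain ⟨c, hc, c_eq⟩ := exists_strictMono_countVec_eq (k := 1) entries (by simp [h.sum_row 0])
  refine ⟨c 0, c_eq.symm.trans ?_⟩
  ext j
  simp [countVec_eq_ite hc.injective, Pi.single_apply, eq_comm]

theorem rhoT_eq_toNat_moment {k : ℕ} {A : Fin (k + 1) → Fin (k + 1) → ℤ} (h : IsASM A) :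
    rhoT A = (moment (A 0)).toNat := by
  obtain ⟨c, hc⟩ := (isASM_iff_isPartialASM_id.1 h).exists_row_zero_eq_single
  have moment_eq : moment (A 0) = (c : ℕ) := by simp [moment, hc, Pi.single_apply]
  have left_of_one (j : Fin (k + 1)) :
      (A 0 j = 0 ∧ ∃ j', j < j' ∧ A 0 j' = 1) ↔ j < c := by
    simpa [hc, Pi.single_apply] using ne_of_lt
  rw [moment_eq, Int.toNat_natCast, ← Fin.card_Iio, rhoT]
  congr 1
  ext j
  exact (mem_filter_univ j).trans ((left_of_one j).trans mem_Iio.symm)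

theorem asmWeight_cons_one {k : ℕ} (x y z : R) {A : Fin (k + 1) → Fin (k + 1) → ℤ} (h : IsASM A) :
    asmWeight x y (Fin.cons z fun _ => 1) A = x ^ nuASM A * y ^ muASM A * z ^ rhoT A := by
  simp [asmWeight, Fin.prod_univ_succ, rhoT_eq_toNat_moment h, nuASM, muASM, inversionSum,
    negOneCount]

theorem asmMat_injective : Function.Injective (asmMat (n := n)) := by
  intro e e' h
  ext i j
  have := congrFun₂ h i j
  simp only [asmMat] at this
  lia

theorem IsASM.exists_asmMat_eq {A : Fin n → Fin n → ℤ} (h : IsASM A) : ∃ e, asmMat e = A := by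
  have (i j : Fin n) : ∃ c : Fin 3, (c : ℤ) - 1 = A i j := by
    rcases h.1 i j with h | h | h
    · exact ⟨0, by simp [h]⟩
    · exact ⟨1, by simp [h]⟩
    · exact ⟨2, by simp [h]⟩
  choose e he using this
  exact ⟨e, funext₂ he⟩

theorem Zsing_succ_eq_partialZ (k : ℕ) (x y z : R) :
    Zsing (k + 1) x y z =
      partialZ x y (Fin.cons z fun _ => 1) (id : Fin (k + 1) → Fin (k + 1)) := by
  classical
  simp only [Zsing, Zqua, one_pow, mul_one, ← sum_filter, partialZ]
  refine sum_bij (fun e _ => asmMat e) (fun e he => ?_) (fun _ _ _ _ h => asmMat_injective h)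
    (fun A hA => ?_) fun e he => (asmWeight_cons_one x y z (mem_filter.1 he).2).symm
  · exact mem_partialASMs.2 (isASM_iff_isPartialASM_id.1 (mem_filter.1 he).2)
  · have hA := isASM_iff_isPartialASM_id.2 (mem_partialASMs.1 hA)
    obtain ⟨e, rfl⟩ := hA.exists_asmMat_eq
    exact ⟨e, mem_filter.2 ⟨mem_univ e, hA⟩, rfl⟩

end SinglyRefined

/-- The singly-refined ASM generating function at `y = x + 1`:
`Σ_A x^{ν(A)} (x+1)^{μ(A)} z^{ρT(A)} = (xz+1)^{n-1} (x+1)^{(n-1)(n-2)/2}`,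
stated for all values of the variables in any commutative ring, equivalently
as an identity of polynomials in `ℤ[x,z]`. -/
theorem stmt14 {R : Type*} [CommRing R] (x z : R) (n : ℕ) (hn : 1 ≤ n) :
    Zsing n x (x + 1) z = (x * z + 1) ^ (n - 1) * (x + 1) ^ ((n - 1) * (n - 2) / 2) := by
  obtain ⟨k, rfl⟩ := Nat.exists_eq_add_of_le' hn
  rw [Zsing_succ_eq_partialZ, partialZ_id_eq_prod, prod_prod_Ioi_cons_one]
  rfl
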